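/- Let Ω ⊆ ℂ be open and let φ₁, φ₂, φ₃ be smooth real-valued functions on Ω with φ₁+φ₂+φ₃ = 0 satisfying the sl(3) Toda equations: ∂∂̄φ₁ = e^{φ₁−φ₂}, ∂∂̄φ₂ = e^{φ₂−φ₃} − e^{φ₁−φ₂}, ∂∂̄φ₃ = −e^{φ₂−φ₃}. Set f = ∂²φ₁ + ∂φ₁·∂φ₂, and define the W₃-generators w₂ = (∂φ₃)² + ∂²φ₃ − ∂²φ₁ − ∂φ₁·∂φ₂ and w₃ = ∂f + f·∂φ₃. Then w₂ and w₃ are holomorphic on Ω: ∂̄w₂ = 0 and ∂̄w₃ = 0. -/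

import Mathlib

open Complex

/-- Wirtinger derivative `∂f = ½(∂ₓf − i ∂_y f)`. -/
noncomputable def wd (f : ℂ → ℂ) (z : ℂ) : ℂ :=
  (1 / 2 : ℂ) * (fderiv ℝ f z 1 - Complex.I * fderiv ℝ f z Complex.I)

/-- Wirtinger derivative `∂̄f = ½(∂ₓf + i ∂_y f)`. -/
noncomputable def wdb (f : ℂ → ℂ) (z : ℂ) : ℂ :=
  (1 / 2 : ℂ) * (fderiv ℝ f z 1 + Complex.I * fderiv ℝ f z Complex.I)

/-- `∂φ` for a real-valued function `φ`. -/
noncomputable def pd (φ : ℂ → ℝ) : ℂ → ℂ :=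
  fun z => wd (fun w => ((φ w : ℝ) : ℂ)) z

/-- `∂̄φ` for a real-valued function `φ`. -/
noncomputable def pdb (φ : ℂ → ℝ) : ℂ → ℂ :=
  fun z => wdb (fun w => ((φ w : ℝ) : ℂ)) z

/-- `f = ∂²φ₁ + ∂φ₁·∂φ₂`. -/
noncomputable def fsl3 (φ1 φ2 : ℂ → ℝ) : ℂ → ℂ :=
  fun z => wd (pd φ1) z + pd φ1 z * pd φ2 z

/-- `w₂ = (∂φ₃)² + ∂²φ₃ − ∂²φ₁ − ∂φ₁·∂φ₂`. -/
noncomputable def w2sl3 (φ1 φ2 φ3 : ℂ → ℝ) : ℂ → ℂ :=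
  fun z => (pd φ3 z) ^ 2 + wd (pd φ3) z - wd (pd φ1) z - pd φ1 z * pd φ2 z

/-- `w₃ = ∂f + f·∂φ₃`. -/
noncomputable def w3sl3 (φ1 φ2 φ3 : ℂ → ℝ) : ℂ → ℂ :=
  fun z => wd (fsl3 φ1 φ2) z + fsl3 φ1 φ2 z * pd φ3 z

/-! Write `aᵢ = ∂φᵢ`, `A = e^{φ₁−φ₂}`, `B = e^{φ₂−φ₃}`. With the twisted derivatives `∂ + a` the
generators are `w₂ = (∂ + a₃)a₃ − (∂ + a₂)a₁` and `w₃ = (∂ + a₃)(∂ + a₂)a₁`. Since `∂̄` commutes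
with `∂`, its commutator with `∂ + a` is multiplication by `∂̄a`; moreover `∂B = B(a₂ − a₃)` gives
the intertwining relation `(∂ + a₃)B = B(∂ + a₂)`. Hence `f = (∂ + a₂)a₁` satisfies `∂̄f = B a₁`, so
`∂̄w₃ = (∂ + a₃)(B a₁) − f B = 0`, while `∂̄w₂ = −B(a₁ + a₂ + a₃) = 0`. -/

open Filter Topology

lemma contDiffOn_ofReal_comp {E : Type*} [NormedAddCommGroup E] [NormedSpace ℝ E] {φ : E → ℝ}
    {s : Set E} {n : WithTop ℕ∞} (hφ : ContDiffOn ℝ n φ s) :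
    ContDiffOn ℝ n (fun x => (φ x : ℂ)) s :=
  ofRealCLM.contDiff.comp_contDiffOn hφ

/-- The constant-coefficient operator `½(∂ₓ + c ∂_y)`, which unifies the two Wirtinger derivatives:
`∂` is the case `c = -I` and `∂̄` is the case `c = I`. -/
noncomputable def wirtinger (c : ℂ) (f : ℂ → ℂ) (z : ℂ) : ℂ :=
  (1 / 2 : ℂ) * (fderiv ℝ f z 1 + c * fderiv ℝ f z I)

section Wirtinger

variable {c : ℂ} {f g : ℂ → ℂ} {z : ℂ}

lemma wd_eq_wirtinger : wd = wirtinger (-I) := by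
  funext f z
  simp only [wd, wirtinger]
  ring

lemma wdb_eq_wirtinger : wdb = wirtinger I := rfl

lemma wirtinger_congr (h : f =ᶠ[𝓝 z] g) : wirtinger c f z = wirtinger c g z := by
  simp only [wirtinger, h.fderiv_eq]

lemma wirtinger_neg : wirtinger c (fun w => -f w) z = -wirtinger c f z := by
  simp only [wirtinger, fderiv_fun_neg, _root_.neg_apply]
  ring

lemma wirtinger_add (hf : DifferentiableAt ℝ f z) (hg : DifferentiableAt ℝ g z) :
    wirtinger c (fun w => f w + g w) z = wirtinger c f z + wirtinger c g z := by
  simp only [wirtinger, fderiv_fun_add hf hg, _root_.add_apply]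
  ring

lemma wirtinger_sub (hf : DifferentiableAt ℝ f z) (hg : DifferentiableAt ℝ g z) :
    wirtinger c (fun w => f w - g w) z = wirtinger c f z - wirtinger c g z := by
  simp only [wirtinger, fderiv_fun_sub hf hg, _root_.sub_apply]
  ring

lemma wirtinger_mul (hf : DifferentiableAt ℝ f z) (hg : DifferentiableAt ℝ g z) :
    wirtinger c (fun w => f w * g w) z = wirtinger c f z * g z + f z * wirtinger c g z := by
  simp only [wirtinger, fderiv_fun_mul hf hg, _root_.add_apply, _root_.smul_apply, smul_eq_mul]
  ring

lemma wirtinger_cexp (hf : DifferentiableAt ℝ f z) :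
    wirtinger c (fun w => cexp (f w)) z = cexp (f z) * wirtinger c f z := by
  simp only [wirtinger, hf.hasFDerivAt.cexp.fderiv, _root_.smul_apply, smul_eq_mul]
  ring

lemma contDiffAt_wirtinger {m n : WithTop ℕ∞} (hf : ContDiffAt ℝ n f z) (hmn : m + 1 ≤ n) :
    ContDiffAt ℝ m (wirtinger c f) z := by
  have hf' : ContDiffAt ℝ m (fderiv ℝ f) z := hf.fderiv_right hmn
  exact contDiffAt_const.mul ((hf'.clm_apply contDiffAt_const).add
    (contDiffAt_const.mul (hf'.clm_apply contDiffAt_const)))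

lemma fderiv_wirtinger_apply (hf : DifferentiableAt ℝ (fderiv ℝ f) z) (v : ℂ) :
    fderiv ℝ (wirtinger c f) z v =
      (1 / 2 : ℂ) * (fderiv ℝ (fderiv ℝ f) z v 1 + c * fderiv ℝ (fderiv ℝ f) z v I) := by
  have hasFDerivAt_apply (u : ℂ) : HasFDerivAt (fun w => fderiv ℝ f w u)
      ((fderiv ℝ (fderiv ℝ f) z).flip u) z := by
    simpa using hf.hasFDerivAt.clm_apply (hasFDerivAt_const u z)
  have hasFDerivAt_wirtinger : HasFDerivAt (wirtinger c f) _ z :=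
    ((hasFDerivAt_apply 1).add ((hasFDerivAt_apply I).const_mul c)).const_mul (1 / 2 : ℂ)
  rw [hasFDerivAt_wirtinger.fderiv]
  simp only [_root_.smul_apply, _root_.add_apply, ContinuousLinearMap.flip_apply, smul_eq_mul]

lemma wirtinger_comm {d : ℂ} (hf : ContDiffAt ℝ 2 f z) :
    wirtinger c (wirtinger d f) z = wirtinger d (wirtinger c f) z := by
  have hf' : DifferentiableAt ℝ (fderiv ℝ f) z :=
    (hf.fderiv_right (m := 1) (by norm_num)).differentiableAt one_ne_zero
  have symm : fderiv ℝ (fderiv ℝ f) z 1 I = fderiv ℝ (fderiv ℝ f) z I 1 :=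
    hf.isSymmSndFDerivAt (by simp) 1 I
  rw [wirtinger, wirtinger]
  simp only [fderiv_wirtinger_apply hf', symm]
  ring

lemma contDiffAt_wd {m n : WithTop ℕ∞} (hf : ContDiffAt ℝ n f z) (hmn : m + 1 ≤ n) :
    ContDiffAt ℝ m (wd f) z :=
  wd_eq_wirtinger ▸ contDiffAt_wirtinger hf hmn

lemma contDiffOn_wd {m n : WithTop ℕ∞} {Ω : Set ℂ} (hΩ : IsOpen Ω) (hf : ContDiffOn ℝ n f Ω)
    (hmn : m + 1 ≤ n) : ContDiffOn ℝ m (wd f) Ω := fun _ hz =>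
  (contDiffAt_wd (hf.contDiffAt (hΩ.mem_nhds hz)) hmn).contDiffWithinAt

lemma wdb_wd_comm (hf : ContDiffAt ℝ 2 f z) : wdb (wd f) z = wd (wdb f) z := by
  simpa only [wd_eq_wirtinger, wdb_eq_wirtinger] using wirtinger_comm hf

lemma wd_add (hf : DifferentiableAt ℝ f z) (hg : DifferentiableAt ℝ g z) :
    wd (fun w => f w + g w) z = wd f z + wd g z := by
  simpa only [wd_eq_wirtinger] using wirtinger_add hf hg

lemma wd_cexp_sub (hf : DifferentiableAt ℝ f z) (hg : DifferentiableAt ℝ g z) :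
    wd (fun w => cexp (f w - g w)) z = cexp (f z - g z) * (wd f z - wd g z) := by
  rw [wd_eq_wirtinger, wirtinger_cexp (hf.fun_sub hg), wirtinger_sub hf hg]

lemma wd_eq_zero_of_eqOn_zero {Ω : Set ℂ} (hΩ : IsOpen Ω) (hf : ∀ w ∈ Ω, f w = 0) (hz : z ∈ Ω) :
    wd f z = 0 := by
  have hf₀ : f =ᶠ[𝓝 z] fun _ => 0 := eventuallyEq_of_mem (hΩ.mem_nhds hz) hf
  simp [wd, hf₀.fderiv_eq]

end Wirtinger

/-- The twisted derivative `(∂ + a) g`, from which the `W₃`-generators are built. -/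
noncomputable def twistedWd (a g : ℂ → ℂ) (z : ℂ) : ℂ :=
  wd g z + g z * a z

section TwistedWd

variable {a b g h : ℂ → ℂ} {z : ℂ}

lemma twistedWd_congr (hgh : g =ᶠ[𝓝 z] h) : twistedWd a g z = twistedWd a h z := by
  simp only [twistedWd, wd_eq_wirtinger, wirtinger_congr hgh, hgh.eq_of_nhds]

lemma contDiffAt_twistedWd {m n : WithTop ℕ∞} (ha : ContDiffAt ℝ m a z) (hg : ContDiffAt ℝ n g z)
    (hmn : m + 1 ≤ n) : ContDiffAt ℝ m (twistedWd a g) z :=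
  (contDiffAt_wd hg hmn).add ((hg.of_le (le_self_add.trans hmn)).mul ha)

lemma wdb_twistedWd (ha : DifferentiableAt ℝ a z) (hg : ContDiffAt ℝ 2 g z) :
    wdb (twistedWd a g) z = twistedWd a (wdb g) z + g z * wdb a z := by
  have hg₁ : DifferentiableAt ℝ g z := hg.differentiableAt two_ne_zero
  have hwd : DifferentiableAt ℝ (wd g) z :=
    (contDiffAt_wd (m := 1) hg (by norm_num)).differentiableAt one_ne_zero
  calc wdb (twistedWd a g) z
      = wdb (wd g) z + wdb (fun w => g w * a w) z := wirtinger_add hwd (hg₁.mul ha)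
    _ = wd (wdb g) z + (wdb g z * a z + g z * wdb a z) :=
        congrArg₂ (· + ·) (wdb_wd_comm hg) (wirtinger_mul hg₁ ha)
    _ = twistedWd a (wdb g) z + g z * wdb a z := (add_assoc _ _ _).symm

lemma twistedWd_mul_of_wd_eq (hh : DifferentiableAt ℝ h z) (hg : DifferentiableAt ℝ g z)
    (hwd : wd h z = h z * (b z - a z)) :
    twistedWd a (fun w => h w * g w) z = h z * twistedWd b g z := by
  rw [twistedWd, wd_eq_wirtinger, wirtinger_mul hh hg, ← wd_eq_wirtinger, hwd, twistedWd]
  ring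

lemma wdb_twistedWd_of_wd_eq (ha : DifferentiableAt ℝ a z) (hg : ContDiffAt ℝ 2 g z)
    (hwdb : wdb g =ᶠ[𝓝 z] h) (hwd : wd h z = h z * (b z - a z)) :
    wdb (twistedWd a g) z = h z * b z + g z * wdb a z := by
  rw [wdb_twistedWd ha hg, twistedWd_congr hwdb, twistedWd, hwd]
  ring

end TwistedWd

section FirstOrderSystem

variable {a₁ a₂ a₃ A B : ℂ → ℂ} {z : ℂ}

lemma wdb_twistedWd_eq_mul (ha₁ : ContDiffAt ℝ 2 a₁ z) (ha₂ : DifferentiableAt ℝ a₂ z)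
    (h₁ : wdb a₁ =ᶠ[𝓝 z] A) (h₂ : wdb a₂ z = B z - A z) (hA : wd A z = A z * (a₁ z - a₂ z)) :
    wdb (twistedWd a₂ a₁) z = B z * a₁ z := by
  rw [wdb_twistedWd_of_wd_eq ha₂ ha₁ h₁ hA, h₂]
  ring

lemma wdb_twistedWd_self (ha₃ : ContDiffAt ℝ 2 a₃ z) (h₃ : wdb a₃ =ᶠ[𝓝 z] fun w => -B w)
    (hB : wd B z = B z * (a₂ z - a₃ z)) :
    wdb (twistedWd a₃ a₃) z = -(B z * (a₂ z + a₃ z)) := by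
  have hB' : wd (fun w => -B w) z = -B z * (a₂ z - a₃ z) := by
    rw [wd_eq_wirtinger, wirtinger_neg, ← wd_eq_wirtinger, hB, neg_mul]
  rw [wdb_twistedWd_of_wd_eq (ha₃.differentiableAt two_ne_zero) ha₃ h₃ hB', h₃.eq_of_nhds]
  ring

lemma wdb_twistedWd_self_sub_twistedWd (ha₁ : ContDiffAt ℝ 2 a₁ z) (ha₂ : ContDiffAt ℝ 1 a₂ z)
    (ha₃ : ContDiffAt ℝ 2 a₃ z) (hf : wdb (twistedWd a₂ a₁) z = B z * a₁ z)
    (h₃ : wdb a₃ =ᶠ[𝓝 z] fun w => -B w) (hB : wd B z = B z * (a₂ z - a₃ z)) :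
    wdb (fun w => twistedWd a₃ a₃ w - twistedWd a₂ a₁ w) z =
      -(B z * (a₁ z + a₂ z + a₃ z)) := by
  have diff_self : DifferentiableAt ℝ (twistedWd a₃ a₃) z :=
    (contDiffAt_twistedWd (ha₃.of_le one_le_two) ha₃ (by norm_num)).differentiableAt one_ne_zero
  have diff_f : DifferentiableAt ℝ (twistedWd a₂ a₁) z :=
    (contDiffAt_twistedWd ha₂ ha₁ (by norm_num)).differentiableAt one_ne_zero
  rw [wdb_eq_wirtinger, wirtinger_sub diff_self diff_f, ← wdb_eq_wirtinger,
    wdb_twistedWd_self ha₃ h₃ hB, hf]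
  ring

lemma wdb_twistedWd_twistedWd_eq_zero (ha₁ : ContDiffAt ℝ 3 a₁ z) (ha₂ : ContDiffAt ℝ 2 a₂ z)
    (ha₃ : DifferentiableAt ℝ a₃ z) (hB₁ : DifferentiableAt ℝ B z)
    (hf : wdb (twistedWd a₂ a₁) =ᶠ[𝓝 z] fun w => B w * a₁ w)
    (h₃ : wdb a₃ z = -B z) (hB : wd B z = B z * (a₂ z - a₃ z)) :
    wdb (twistedWd a₃ (twistedWd a₂ a₁)) z = 0 := by
  rw [wdb_twistedWd ha₃ (contDiffAt_twistedWd ha₂ ha₁ (by norm_num)), twistedWd_congr hf,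
    twistedWd_mul_of_wd_eq hB₁ (ha₁.differentiableAt three_ne_zero) hB, h₃]
  ring

theorem wdb_generators_eq_zero_of_firstOrderSystem {Ω : Set ℂ} (hΩ : IsOpen Ω)
    (ha₁ : ContDiffOn ℝ 3 a₁ Ω) (ha₂ : ContDiffOn ℝ 2 a₂ Ω) (ha₃ : ContDiffOn ℝ 2 a₃ Ω)
    (hB₁ : DifferentiableOn ℝ B Ω) (hsum : ∀ z ∈ Ω, a₁ z + a₂ z + a₃ z = 0)
    (h₁ : ∀ z ∈ Ω, wdb a₁ z = A z) (h₂ : ∀ z ∈ Ω, wdb a₂ z = B z - A z)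
    (h₃ : ∀ z ∈ Ω, wdb a₃ z = -B z) (hA : ∀ z ∈ Ω, wd A z = A z * (a₁ z - a₂ z))
    (hB : ∀ z ∈ Ω, wd B z = B z * (a₂ z - a₃ z)) :
    ∀ z ∈ Ω, wdb (fun w => twistedWd a₃ a₃ w - twistedWd a₂ a₁ w) z = 0 ∧
      wdb (twistedWd a₃ (twistedWd a₂ a₁)) z = 0 := by
  have smooth₁ {z} (hz : z ∈ Ω) : ContDiffAt ℝ 3 a₁ z := ha₁.contDiffAt (hΩ.mem_nhds hz)
  have smooth₂ {z} (hz : z ∈ Ω) : ContDiffAt ℝ 2 a₂ z := ha₂.contDiffAt (hΩ.mem_nhds hz)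
  have smooth₃ {z} (hz : z ∈ Ω) : ContDiffAt ℝ 2 a₃ z := ha₃.contDiffAt (hΩ.mem_nhds hz)
  have near {z} (hz : z ∈ Ω) {g h : ℂ → ℂ} (hgh : ∀ w ∈ Ω, g w = h w) : g =ᶠ[𝓝 z] h :=
    eventuallyEq_of_mem (hΩ.mem_nhds hz) hgh
  have wdb_f : ∀ z ∈ Ω, wdb (twistedWd a₂ a₁) z = B z * a₁ z := fun z hz =>
    wdb_twistedWd_eq_mul ((smooth₁ hz).of_le (by norm_num))
      ((smooth₂ hz).differentiableAt two_ne_zero) (near hz h₁) (h₂ z hz) (hA z hz)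
  intro z hz
  constructor
  · rw [wdb_twistedWd_self_sub_twistedWd ((smooth₁ hz).of_le (by norm_num))
      ((smooth₂ hz).of_le one_le_two) (smooth₃ hz) (wdb_f z hz) (near hz h₃) (hB z hz),
      hsum z hz, mul_zero, neg_zero]
  · exact wdb_twistedWd_twistedWd_eq_zero (smooth₁ hz) (smooth₂ hz)
      ((smooth₃ hz).differentiableAt two_ne_zero) (hB₁.differentiableAt (hΩ.mem_nhds hz))
      (near hz wdb_f) (h₃ z hz) (hB z hz)

end FirstOrderSystem

theorem sl3_W_generators_holomorphic_general {Ω : Set ℂ} (hΩ : IsOpen Ω) {u₁ u₂ u₃ : ℂ → ℂ}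
    (hu₁ : ContDiffOn ℝ 4 u₁ Ω) (hu₂ : ContDiffOn ℝ 3 u₂ Ω) (hu₃ : ContDiffOn ℝ 3 u₃ Ω)
    (hsum : ∀ z ∈ Ω, wd (fun w => u₁ w + u₂ w + u₃ w) z = 0)
    (toda₁ : ∀ z ∈ Ω, wd (wdb u₁) z = cexp (u₁ z - u₂ z))
    (toda₂ : ∀ z ∈ Ω, wd (wdb u₂) z = cexp (u₂ z - u₃ z) - cexp (u₁ z - u₂ z))
    (toda₃ : ∀ z ∈ Ω, wd (wdb u₃) z = -cexp (u₂ z - u₃ z)) :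
    ∀ z ∈ Ω,
      wdb (fun w => wd u₃ w ^ 2 + wd (wd u₃) w - wd (wd u₁) w - wd u₁ w * wd u₂ w) z = 0 ∧
      wdb (twistedWd (wd u₃) (twistedWd (wd u₂) (wd u₁))) z = 0 := by
  have diff {u : ℂ → ℂ} (hu : ContDiffOn ℝ 3 u Ω) {z} (hz : z ∈ Ω) : DifferentiableAt ℝ u z :=
    (hu.contDiffAt (hΩ.mem_nhds hz)).differentiableAt three_ne_zero
  have comm {u : ℂ → ℂ} (hu : ContDiffOn ℝ 3 u Ω) {z} (hz : z ∈ Ω) :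
      wdb (wd u) z = wd (wdb u) z :=
    wdb_wd_comm ((hu.contDiffAt (hΩ.mem_nhds hz)).of_le (by norm_num))
  have hu₁' : ContDiffOn ℝ 3 u₁ Ω := hu₁.of_le (by norm_num)
  have wd_sum : ∀ z ∈ Ω, wd u₁ z + wd u₂ z + wd u₃ z = 0 := fun z hz => by
    rw [← wd_add (diff hu₁' hz) (diff hu₂ hz),
      ← wd_add ((diff hu₁' hz).fun_add (diff hu₂ hz)) (diff hu₃ hz), hsum z hz]
  have w₂_eq : (fun w => wd u₃ w ^ 2 + wd (wd u₃) w - wd (wd u₁) w - wd u₁ w * wd u₂ w) =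
      fun w => twistedWd (wd u₃) (wd u₃) w - twistedWd (wd u₂) (wd u₁) w := by
    funext w
    simp only [twistedWd]
    ring
  rw [w₂_eq]
  exact wdb_generators_eq_zero_of_firstOrderSystem hΩ (contDiffOn_wd hΩ hu₁ (by norm_num))
    (contDiffOn_wd hΩ hu₂ (by norm_num)) (contDiffOn_wd hΩ hu₃ (by norm_num))
    (fun z hz => ((diff hu₂ hz).fun_sub (diff hu₃ hz)).cexp.differentiableWithinAt) wd_sum
    (fun z hz => (comm hu₁' hz).trans (toda₁ z hz)) (fun z hz => (comm hu₂ hz).trans (toda₂ z hz))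
    (fun z hz => (comm hu₃ hz).trans (toda₃ z hz))
    (fun z hz => wd_cexp_sub (diff hu₁' hz) (diff hu₂ hz))
    (fun z hz => wd_cexp_sub (diff hu₂ hz) (diff hu₃ hz))

/-- For a solution of the `sl(3)` Toda equations, the `W₃`-generators `w₂` and `w₃` are
holomorphic: `∂̄w₂ = 0` and `∂̄w₃ = 0` on `Ω`. -/
theorem sl3_W_generators_holomorphic (Ω : Set ℂ) (hΩ : IsOpen Ω)
    (φ1 φ2 φ3 : ℂ → ℝ)
    (h1 : ContDiffOn ℝ (⊤ : ℕ∞) φ1 Ω) (h2 : ContDiffOn ℝ (⊤ : ℕ∞) φ2 Ω) (h3 : ContDiffOn ℝ (⊤ : ℕ∞) φ3 Ω)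
    (hsum : ∀ z ∈ Ω, φ1 z + φ2 z + φ3 z = 0)
    (t1 : ∀ z ∈ Ω, wd (pdb φ1) z = ((Real.exp (φ1 z - φ2 z) : ℝ) : ℂ))
    (t2 : ∀ z ∈ Ω, wd (pdb φ2) z =
      ((Real.exp (φ2 z - φ3 z) : ℝ) : ℂ) - ((Real.exp (φ1 z - φ2 z) : ℝ) : ℂ))
    (t3 : ∀ z ∈ Ω, wd (pdb φ3) z = -((Real.exp (φ2 z - φ3 z) : ℝ) : ℂ)) :
    ∀ z ∈ Ω, wdb (w2sl3 φ1 φ2 φ3) z = 0 ∧ wdb (w3sl3 φ1 φ2 φ3) z = 0 := by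
  exact sl3_W_generators_holomorphic_general hΩ
    (contDiffOn_ofReal_comp (contDiffOn_infty.1 h1 4))
    (contDiffOn_ofReal_comp (contDiffOn_infty.1 h2 3))
    (contDiffOn_ofReal_comp (contDiffOn_infty.1 h3 3))
    (fun z hz => wd_eq_zero_of_eqOn_zero hΩ (fun w hw => mod_cast hsum w hw) hz)
    (fun z hz => (t1 z hz).trans (by push_cast; rfl))
    (fun z hz => (t2 z hz).trans (by push_cast; rfl))
    (fun z hz => (t3 z hz).trans (by push_cast; rfl))
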